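/- There are exactly 9 isomorphism classes of 5-dimensional nilpotent Lie algebras over any field k with char(k) ≠ 2. -/

import Mathlib

/-- `br` is a Lie bracket on `kⁿ`: bilinear, alternating, and satisfying the Jacobi
identity (in Leibniz form). -/
def IsLieBracket (k : Type*) [Field k] {n : ℕ}
    (br : (Fin n → k) → (Fin n → k) → (Fin n → k)) : Prop :=
  (∀ x y z, br (x + y) z = br x z + br y z) ∧
  (∀ (c : k) (x y), br (c • x) y = c • br x y) ∧
  (∀ x y z, br x (y + z) = br x y + br x z) ∧
  (∀ (c : k) (x y), br x (c • y) = c • br x y) ∧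
  (∀ x, br x x = 0) ∧
  (∀ x y z, br x (br y z) = br (br x y) z + br y (br x z))

/-- The lower central series of a bracket on `kⁿ`. -/
noncomputable def lcs {k : Type*} [Field k] {n : ℕ}
    (br : (Fin n → k) → (Fin n → k) → (Fin n → k)) : ℕ → Submodule k (Fin n → k)
  | 0 => ⊤
  | m + 1 => Submodule.span k {w | ∃ x y, y ∈ lcs br m ∧ w = br x y}

/-- A bracket is nilpotent if its lower central series reaches `0`. -/
def IsNilpotentBracket {k : Type*} [Field k] {n : ℕ}
    (br : (Fin n → k) → (Fin n → k) → (Fin n → k)) : Prop :=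
  ∃ m, lcs br m = ⊥

/-- Two brackets on `kⁿ` are isomorphic if some linear automorphism of `kⁿ`
intertwines them. -/
def BracketIso {k : Type*} [Field k] {n : ℕ}
    (br br' : (Fin n → k) → (Fin n → k) → (Fin n → k)) : Prop :=
  ∃ e : (Fin n → k) ≃ₗ[k] (Fin n → k), ∀ x y, e (br x y) = br' (e x) (e y)

/-- The type of nilpotent Lie algebra structures on `kⁿ`. -/
def NilpLieStr (k : Type*) [Field k] (n : ℕ) : Type _ :=
  {br : (Fin n → k) → (Fin n → k) → (Fin n → k) // IsLieBracket k br ∧ IsNilpotentBracket br}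

/-!
A nilpotent bracket preserves a full flag strictly, so in an adapted basis it is given by ten
structure constants subject to two quadratic relations. One can moreover arrange that
`A = ⟨e₂, e₃, e₄⟩` is an abelian ideal; the bracket then amounts to two commuting nilpotent
endomorphisms `X = ad e₀` and `Y = ad e₁` of `A` together with the vector `[e₀, e₁] ∈ A`.
Replacing `Y` by a combination with `X` leaves four types: `X` is a single Jordan block, `X` and
`Y` share a two-dimensional kernel, they share a one-dimensional image, or both vanish. In each type
the remaining parameters can be rescaled away over any field. The resulting nine brackets are told
apart by the dimensions of the centralizers of the first three terms of the lower central series.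
-/

section General

variable {k : Type*} [Field k] {n : ℕ} {br br' br'' : (Fin n → k) → (Fin n → k) → (Fin n → k)}

theorem BracketIso.trans (h : BracketIso br br') (h' : BracketIso br' br'') :
    BracketIso br br'' := by
  obtain ⟨e, he⟩ := h
  obtain ⟨e', he'⟩ := h'
  exact ⟨e.trans e', fun x y => by simp only [LinearEquiv.trans_apply, he, he']⟩

theorem BracketIso.symm (h : BracketIso br br') : BracketIso br' br := by
  obtain ⟨e, he⟩ := h
  exact ⟨e.symm, fun x y => e.injective (by simp only [he, LinearEquiv.apply_symm_apply])⟩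

/-- A Lie bracket as a bilinear map, so that the linear-map API applies to it. -/
def IsLieBracket.toBilin (h : IsLieBracket k br) :
    (Fin n → k) →ₗ[k] (Fin n → k) →ₗ[k] (Fin n → k) :=
  LinearMap.mk₂ k br h.1 h.2.1 h.2.2.1 h.2.2.2.1

@[simp]
theorem IsLieBracket.toBilin_apply (h : IsLieBracket k br) (x y : Fin n → k) :
    h.toBilin x y = br x y :=
  rfl

theorem IsLieBracket.isAlt_toBilin (h : IsLieBracket k br) : h.toBilin.IsAlt :=
  h.2.2.2.2.1

theorem IsLieBracket.of_iso (H : IsLieBracket k br') (h : BracketIso br br') :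
    IsLieBracket k br := by
  obtain ⟨e, he⟩ := h
  obtain ⟨add_left, smul_left, add_right, smul_right, alt, jacobi⟩ := H
  refine ⟨?_, ?_, ?_, ?_, ?_, ?_⟩ <;> intros <;> apply e.injective
  · simp only [he, map_add, add_left]
  · simp only [he, map_smul, smul_left]
  · simp only [he, map_add, add_right]
  · simp only [he, map_smul, smul_right]
  · simp only [he, map_zero, alt]
  · simp only [he, map_add, ← jacobi]

theorem IsNilpotentBracket.exists_notMem (H : IsNilpotentBracket br)
    {U : Submodule k (Fin n → k)} (hU : U ≠ ⊤) : ∃ v ∉ U, ∀ x, br x v ∈ U := by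
  by_contra! hout
  have not_le (m : ℕ) : ¬ lcs br m ≤ U := by
    induction m with
    | zero => exact fun h => hU (top_le_iff.1 h)
    | succ m ih =>
      obtain ⟨v, hv, hvU⟩ := SetLike.not_le_iff_exists.1 ih
      obtain ⟨x, hx⟩ := hout v hvU
      exact fun h => hx (h (Submodule.subset_span ⟨x, v, hv, rfl⟩))
  obtain ⟨m, hm⟩ := H
  exact not_le m (hm ▸ bot_le)

theorem IsNilpotentBracket.exists_linearIndependent (H : IsNilpotentBracket br) {m : ℕ}
    (hm : m ≤ n) :
    ∃ v : Fin m → Fin n → k, LinearIndependent k v ∧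
      ∀ x j, br x (v j) ∈ Submodule.span k (v '' Set.Ioi j) := by
  induction m with
  | zero => exact ⟨Fin.elim0, linearIndependent_empty_type, fun _ j => j.elim0⟩
  | succ m ih =>
    obtain ⟨v, hv, hflag⟩ := ih (Nat.le_of_succ_le hm)
    have span_ne_top : Submodule.span k (Set.range v) ≠ ⊤ := by
      intro h
      have := finrank_span_eq_card hv
      rw [h, finrank_top, Module.finrank_fin_fun, Fintype.card_fin] at this
      omega
    obtain ⟨w, hw, hbr⟩ := H.exists_notMem span_ne_top
    refine ⟨Fin.cons w v, linearIndependent_finCons.2 ⟨hv, hw⟩, fun x j => ?_⟩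
    cases j using Fin.cases with
    | zero =>
      refine Submodule.span_mono ?_ (hbr x)
      rintro _ ⟨l, rfl⟩
      exact ⟨l.succ, l.succ_pos, rfl⟩
    | succ j =>
      refine Submodule.span_mono ?_ (hflag x j)
      rintro _ ⟨l, hl, rfl⟩
      exact ⟨l.succ, Fin.succ_lt_succ_iff.2 hl, rfl⟩

/-- A bracket is strictly triangular if left multiplications map each subspace
`{y | y r = 0 for r < l}` of the standard flag of `kⁿ` into the next one. -/
def IsStrictlyTriangular (br : (Fin n → k) → (Fin n → k) → (Fin n → k)) : Prop :=
  ∀ x y l, (∀ r < l, y r = 0) → br x y l = 0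

theorem IsStrictlyTriangular.isNilpotentBracket (ht : IsStrictlyTriangular br) :
    IsNilpotentBracket br := by
  have vanish (m : ℕ) : ∀ x ∈ lcs br m, ∀ l : Fin n, (l : ℕ) < m → x l = 0 := by
    induction m with
    | zero => exact fun _ _ _ hl => absurd hl (Nat.not_lt_zero _)
    | succ m ih =>
      intro x hx l hl
      have hle : lcs br (m + 1) ≤ LinearMap.ker (LinearMap.proj (φ := fun _ => k) l) := by
        refine Submodule.span_le.2 ?_
        rintro _ ⟨u, v, hv, rfl⟩
        exact ht u v l fun r hr => ih v hv r (by omega)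
      exact hle hx
  exact ⟨n, (Submodule.eq_bot_iff _).2 fun x hx => funext fun l => vanish n x hx l l.2⟩

theorem IsNilpotentBracket.exists_isStrictlyTriangular (hN : IsNilpotentBracket br)
    (hL : IsLieBracket k br) : ∃ br', IsStrictlyTriangular br' ∧ BracketIso br br' := by
  obtain ⟨v, hv, hflag⟩ := hN.exists_linearIndependent le_rfl
  let b := basisOfLinearIndependentOfCardEqFinrank' v hv (by simp)
  have repr_eq_zero {x : Fin n → k} {l j : Fin n} (hlj : l ≤ j) :
      b.repr (br x (b j)) l = 0 := by
    by_contra hne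
    have hmem : br x (b j) ∈ Submodule.span k (b '' Set.Ioi j) := by simpa [b] using hflag x j
    exact hlj.not_gt (b.mem_span_image.1 hmem (Finsupp.mem_support_iff.2 hne))
  refine ⟨fun x y => b.equivFun (br (b.equivFun.symm x) (b.equivFun.symm y)),
    fun x y l hy => ?_, b.equivFun, fun x y => by simp only [LinearEquiv.symm_apply_apply]⟩
  have expand (u : Fin n → k) : br u (b.equivFun.symm y) = ∑ r, y r • br u (b r) := by
    have := map_sum (hL.toBilin u) (fun r => y r • b r) Finset.univ
    simpa only [map_smul, IsLieBracket.toBilin_apply, ← b.equivFun_symm_apply] using this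
  change b.equivFun _ l = 0
  rw [expand, map_sum, Finset.sum_apply]
  refine Finset.sum_eq_zero fun r _ => ?_
  obtain hr | hr := lt_or_ge r l
  · simp [hy r hr]
  · simp [repr_eq_zero hr]

theorem BracketIso.lcs_eq_map {e : (Fin n → k) ≃ₗ[k] (Fin n → k)}
    (he : ∀ x y, e (br x y) = br' (e x) (e y)) (m : ℕ) :
    lcs br' m = (lcs br m).map (e : (Fin n → k) →ₗ[k] (Fin n → k)) := by
  induction m with
  | zero => exact (LinearEquiv.range e).symm.trans (LinearMap.range_eq_map _)
  | succ m ih =>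
    rw [lcs, lcs, Submodule.map_span, ih]
    congr 1
    ext w
    constructor
    · rintro ⟨x, _, ⟨y, hy, rfl⟩, rfl⟩
      exact ⟨br (e.symm x) y, ⟨e.symm x, y, hy, rfl⟩, by simp [he]⟩
    · rintro ⟨_, ⟨x, y, hy, rfl⟩, rfl⟩
      exact ⟨e x, e y, Submodule.mem_map_of_mem hy, he x y⟩

/-- The dimension of the centralizer of the `m`-th term of the lower central series. For a Lie
bracket the span is superfluous: the centralizer is already a subspace. -/
noncomputable def centralizerRank (br : (Fin n → k) → (Fin n → k) → (Fin n → k)) (m : ℕ) : ℕ :=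
  Module.finrank k (Submodule.span k {x | ∀ y ∈ lcs br m, br x y = 0})

theorem BracketIso.centralizerRank_eq (h : BracketIso br br') (m : ℕ) :
    centralizerRank br m = centralizerRank br' m := by
  obtain ⟨e, he⟩ := h
  have image_eq : (e : (Fin n → k) →ₗ[k] (Fin n → k)) '' {x | ∀ y ∈ lcs br m, br x y = 0} =
      {x | ∀ y ∈ lcs br' m, br' x y = 0} := by
    ext x
    obtain ⟨x, rfl⟩ := e.surjective x
    simp [BracketIso.lcs_eq_map he, Submodule.mem_map, ← he, -Submodule.mem_map_equiv]
  rw [centralizerRank, centralizerRank, ← image_eq, ← Submodule.map_span]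
  exact (e.finrank_map_eq _).symm

theorem finrank_span_eq_card_of_coordinates {S : Set (Fin n → k)} (T : Finset (Fin n))
    (hS : ∀ x, x ∈ S ↔ ∀ l ∉ T, x l = 0) :
    Module.finrank k (Submodule.span k S) = T.card := by
  have span_eq : Submodule.span k S =
      ⨅ l ∈ (T : Set (Fin n))ᶜ, LinearMap.ker (LinearMap.proj (R := k) (φ := fun _ => k) l) := by
    rw [← Submodule.span_eq (⨅ l ∈ _, _)]
    congr 1
    ext x
    simp [hS]
  rw [span_eq, (LinearMap.iInfKerProjEquiv k (fun _ => k) disjoint_compl_right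
    (by simp)).finrank_eq]
  simp

theorem lcs_zero_eq_span :
    lcs br 0 = Submodule.span k (Set.range fun p : Fin n => Pi.single p (1 : k)) :=
  (Pi.basisFun k (Fin n)).span_eq.symm.trans (by congr! 2; ext p : 1; exact Pi.basisFun_apply ..)

theorem IsLieBracket.lcs_succ_eq_span (hL : IsLieBracket k br) {m : ℕ} {ι : Type*}
    {v : ι → Fin n → k} (hv : lcs br m = Submodule.span k (Set.range v)) :
    lcs br (m + 1) =
      Submodule.span k (Set.range fun p : Fin n × ι => br (Pi.single p.1 1) (v p.2)) := by
  have lcs_eq_map₂ : lcs br (m + 1) = Submodule.map₂ hL.toBilin (lcs br 0) (lcs br m) := by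
    rw [Submodule.map₂_eq_span_image2, lcs, lcs]
    congr 1
    ext w
    simp [eq_comm]
  rw [lcs_eq_map₂, lcs_zero_eq_span, hv, Submodule.map₂_span_span, Set.image2_range]
  rfl

theorem IsLieBracket.centralizerRank_eq_card (hL : IsLieBracket k br) {m : ℕ} {ι : Type*}
    {v : ι → Fin n → k} (hv : lcs br m = Submodule.span k (Set.range v)) (T : Finset (Fin n))
    (hT : ∀ x, (∀ p, br x (v p) = 0) ↔ ∀ l ∉ T, x l = 0) : centralizerRank br m = T.card := by
  refine finrank_span_eq_card_of_coordinates T fun x => Iff.trans ?_ (hT x)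
  have le_ker : lcs br m ≤ LinearMap.ker (hL.toBilin x) ↔
      Set.range v ⊆ (LinearMap.ker (hL.toBilin x) : Set _) :=
    hv ▸ Submodule.span_le
  exact le_ker.trans Set.range_subset_iff

end General

section DimensionFive

variable {k : Type*} [Field k] {a b c d e f g h i j : k}

/-- The brackets on `k⁵` compatible with the standard flag: `[eₚ, e_q]` for `p < q` lies in the
span of the `eₗ` with `l > q`. The structure constants are those of
`[e₀, e₁] = a e₂ + b e₃ + c e₄`, `[e₀, e₂] = d e₃ + e e₄`, `[e₀, e₃] = f e₄`,
`[e₁, e₂] = g e₃ + h e₄`, `[e₁, e₃] = i e₄` and `[e₂, e₃] = j e₄`. -/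
def flagBracket (a b c d e f g h i j : k) (x y : Fin 5 → k) : Fin 5 → k :=
  ![0, 0,
    a * (x 0 * y 1 - x 1 * y 0),
    b * (x 0 * y 1 - x 1 * y 0) + d * (x 0 * y 2 - x 2 * y 0) + g * (x 1 * y 2 - x 2 * y 1),
    c * (x 0 * y 1 - x 1 * y 0) + e * (x 0 * y 2 - x 2 * y 0) + f * (x 0 * y 3 - x 3 * y 0) +
      h * (x 1 * y 2 - x 2 * y 1) + i * (x 1 * y 3 - x 3 * y 1) + j * (x 2 * y 3 - x 3 * y 2)]

theorem isStrictlyTriangular_flagBracket :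
    IsStrictlyTriangular (flagBracket a b c d e f g h i j) := by
  intro x y l hy
  fin_cases l <;> simp [flagBracket, Fin.forall_fin_succ] at hy ⊢ <;> simp [hy]

theorem IsStrictlyTriangular.exists_eq_flagBracket {br : (Fin 5 → k) → (Fin 5 → k) → (Fin 5 → k)}
    (ht : IsStrictlyTriangular br) (hL : IsLieBracket k br) :
    ∃ a b c d e f g h i j, br = flagBracket a b c d e f g h i j := by
  let s (p q l : Fin 5) : k := br (Pi.single p 1) (Pi.single q 1) l
  have s_skew (p q l : Fin 5) : s p q l = -s q p l :=
    (congrFun (hL.isAlt_toBilin.neg _ _) l).symm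
  have s_self (p l : Fin 5) : s p p l = 0 := congrFun (hL.isAlt_toBilin.self_eq_zero _) l
  have s_right {p q l : Fin 5} (hlq : l ≤ q) : s p q l = 0 :=
    ht _ _ _ fun r hr => Pi.single_eq_of_ne (hr.trans_le hlq).ne 1
  have s_left {p q l : Fin 5} (hlp : l ≤ p) : s p q l = 0 := by
    rw [s_skew, s_right hlp, neg_zero]
  have expand (x y : Fin 5 → k) (l : Fin 5) : br x y l = ∑ p, ∑ q, x p * (y q * s p q l) := by
    have := (LinearMap.sum_repr_mul_repr_mul (Pi.basisFun k (Fin 5)) (Pi.basisFun k (Fin 5))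
      (B := hL.toBilin) x y).symm
    simpa [Finsupp.sum_fintype, s] using congrFun this l
  refine ⟨s 0 1 2, s 0 1 3, s 0 1 4, s 0 2 3, s 0 2 4, s 0 3 4, s 1 2 3, s 1 2 4, s 1 3 4,
    s 2 3 4, ?_⟩
  ext x y l
  rw [expand]
  fin_cases l <;>
    simp [Fin.sum_univ_five, flagBracket, s_self, s_left, s_right, s_skew 1 0, s_skew 2 0,
      s_skew 3 0, s_skew 2 1, s_skew 3 1, s_skew 3 2] <;>
    ring

theorem isLieBracket_flagBracket_iff :
    IsLieBracket k (flagBracket a b c d e f g h i j) ↔ a * j = 0 ∧ g * f = d * i - b * j := by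
  constructor
  · rintro ⟨-, -, -, -, -, jacobi⟩
    have jacobi₀₁₃ : 0 = j * a := by
      simpa [flagBracket, -zero_eq_mul] using
        congrFun (jacobi ![1, 0, 0, 0, 0] ![0, 1, 0, 0, 0] ![0, 0, 0, 1, 0]) 4
    have jacobi₀₁₂ : f * g = -(j * b) + i * d := by
      simpa [flagBracket] using
        congrFun (jacobi ![1, 0, 0, 0, 0] ![0, 1, 0, 0, 0] ![0, 0, 1, 0, 0]) 4
    exact ⟨by linear_combination -jacobi₀₁₃, by linear_combination jacobi₀₁₂⟩
  · rintro ⟨haj, hgf⟩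
    refine ⟨?_, ?_, ?_, ?_, ?_, ?_⟩
    iterate 4
      intros
      ext l
      fin_cases l <;> simp [flagBracket] <;> ring
    · intro x
      ext l
      fin_cases l <;> simp [flagBracket, mul_comm]
    · intro x y z
      ext l
      fin_cases l <;> simp [flagBracket]
      · ring
      · linear_combination
          (x 0 * (y 1 * z 2 - y 2 * z 1) - x 1 * (y 0 * z 2 - y 2 * z 0) +
            x 2 * (y 0 * z 1 - y 1 * z 0)) * hgf -
          (x 0 * (y 1 * z 3 - y 3 * z 1) - x 1 * (y 0 * z 3 - y 3 * z 0) +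
            x 3 * (y 0 * z 1 - y 1 * z 0)) * haj

/-- The nine representatives, in the order `L₅,₁, …, L₅,₉` of de Graaf's classification. -/
def nilpModel (k : Type*) [Field k] : Fin 9 → (Fin 5 → k) → (Fin 5 → k) → (Fin 5 → k) :=
  ![flagBracket 0 0 0 0 0 0 0 0 0 0,
    flagBracket 1 0 0 0 0 0 0 0 0 0,
    flagBracket 1 0 0 1 0 0 0 0 0 0,
    flagBracket 0 0 1 0 0 0 0 0 0 1,
    flagBracket 1 0 0 0 1 0 0 0 1 0,
    flagBracket 1 0 0 1 0 1 0 1 0 0,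
    flagBracket 1 0 0 1 0 1 0 0 0 0,
    flagBracket 0 1 0 0 1 0 0 0 0 0,
    flagBracket 1 0 0 1 0 0 0 1 0 0]

/-- A bracket is standard if it is isomorphic to one of the nine representatives. -/
def IsStandard (br : (Fin 5 → k) → (Fin 5 → k) → (Fin 5 → k)) : Prop :=
  ∃ n, BracketIso (nilpModel k n) br

theorem IsStandard.of_iso {br br' : (Fin 5 → k) → (Fin 5 → k) → (Fin 5 → k)} (hs : IsStandard br)
    (h : BracketIso br br') : IsStandard br' :=
  hs.imp fun _ hn => hn.trans h

-- Row `p` of `M` is the image of `eₚ`. The default proofs cover a determinant that is a monomial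
-- in quantities assumed nonzero, and polynomial identities that need no relation.
theorem BracketIso.of_vecMul {br br' : (Fin 5 → k) → (Fin 5 → k) → (Fin 5 → k)}
    (M : Matrix (Fin 5) (Fin 5) k)
    (hM : M.det ≠ 0 := by simp [Matrix.det_succ_row_zero, Fin.sum_univ_succ, Fin.succAbove, *])
    (h : ∀ x y, Matrix.vecMul (br x y) M = br' (Matrix.vecMul x M) (Matrix.vecMul y M) := by
      intro x y
      ext l
      fin_cases l <;>
        simp [nilpModel, flagBracket, Matrix.vecMul, dotProduct, Fin.sum_univ_five,
          -mul_eq_mul_left_iff] <;>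
        ring) :
    BracketIso br br' :=
  ⟨LinearEquiv.ofInjectiveEndo M.vecMulLinear
    (Matrix.vecMul_injective_of_isUnit ((Matrix.isUnit_iff_isUnit_det M).2 hM.isUnit)), h⟩

set_option maxHeartbeats 400000 in
theorem isStandard_jordan (a h : k) : IsStandard (flagBracket a 0 0 1 0 1 0 h 0 0) := by
  obtain rfl | ha := eq_or_ne a 0 <;> obtain rfl | hh := eq_or_ne h 0
  · exact ⟨2, .of_vecMul !![1, 0, 0, 0, 0; 0, 0, 1, 0, 0; 0, 0, 0, 1, 0; 0, 0, 0, 0, 1;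
      0, 1, 0, 0, 0]⟩
  · exact ⟨4, .of_vecMul !![h, 0, 0, 0, 0; 0, 0, 1, 0, 0; 0, 0, 0, h, 0; 0, -h, 0, 0, 0;
      0, 0, 0, 0, h ^ 2]⟩
  · exact ⟨6, .of_vecMul !![1, 0, 0, 0, 0; 0, 1, 0, 0, 0; 0, 0, a, 0, 0; 0, 0, 0, a, 0;
      0, 0, 0, 0, a]⟩
  · exact ⟨5, .of_vecMul !![h, 0, 0, 0, 0; 0, h, 0, 0, 0; 0, 0, h ^ 2 * a, 0, 0;
      0, 0, 0, h ^ 3 * a, 0; 0, 0, 0, 0, h ^ 4 * a]⟩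

set_option maxHeartbeats 400000 in
theorem isStandard_commonKernel (a c h : k) : IsStandard (flagBracket a 0 c 1 0 0 0 h 0 0) := by
  obtain rfl | ha := eq_or_ne a 0 <;> obtain rfl | hh := eq_or_ne h 0
  · obtain rfl | hc := eq_or_ne c 0
    · exact ⟨1, .of_vecMul !![1, 0, 0, 0, 0; 0, 0, 1, 0, 0; 0, 0, 0, 1, 0; 0, 1, 0, 0, 0;
        0, 0, 0, 0, 1]⟩
    · exact ⟨7, .of_vecMul !![1, 0, 0, 0, 0; 0, 1, 0, 0, 0; 0, 0, 1, 0, 0; 0, 0, 0, 0, c;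
        0, 0, 0, 1, 0]⟩
  · exact ⟨7, .of_vecMul !![0, 0, 1, 0, 0; 0, 1, 0, 0, 0; h, 0, c, 0, 0; 0, 0, 0, 0, -h;
      0, 0, 0, -h, 0]⟩
  · exact ⟨2, .of_vecMul !![1, 0, 0, 0, 0; 0, 1, 0, 0, 0; 0, 0, a, 0, c; 0, 0, 0, a, 0;
      0, 0, 0, 0, 1]⟩
  · exact ⟨8, .of_vecMul !![1, 0, 0, 0, 0; 0, 1, 0, 0, 0; 0, 0, a, 0, c; 0, 0, 0, a, 0;
      0, 0, 0, 0, a * h]⟩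

theorem isStandard_commonImage (a b h : k) : IsStandard (flagBracket a b 0 0 0 1 0 h 0 0) := by
  obtain rfl | hh := eq_or_ne h 0
  · exact (isStandard_commonKernel b a 0).of_iso (.of_vecMul !![1, 0, 0, 0, 0; 0, 1, 0, 0, 0;
      0, 0, 0, 1, 0; 0, 0, 0, 0, 1; 0, 0, 1, 0, 0])
  obtain rfl | ha := eq_or_ne a 0
  · obtain rfl | hb := eq_or_ne b 0
    · exact ⟨3, .of_vecMul !![1, 0, 0, 0, 0; 0, 0, 0, h, 0; 0, 1, 0, 0, 0; 0, 0, 1, 0, 0;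
        0, 0, 0, 0, h]⟩
    · exact ⟨4, .of_vecMul !![h, 0, 0, 0, 0; 0, 1, 0, 0, 0; 0, 0, 0, h * b, 0;
        0, 0, h * b, 0, 0; 0, 0, 0, 0, h ^ 2 * b]⟩
  · exact ⟨4, .of_vecMul !![0, 1, 0, 0, 0; a * h, -b, 0, 0, 0;
      0, 0, -(a ^ 2 * h), -(a * b * h), 0; 0, 0, 0, -(a * h), 0; 0, 0, 0, 0, -(a * h) ^ 2]⟩

theorem isStandard_trivialAction (a b c : k) : IsStandard (flagBracket a b c 0 0 0 0 0 0 0) := by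
  obtain rfl | ha := eq_or_ne a 0
  · obtain rfl | hb := eq_or_ne b 0
    · obtain rfl | hc := eq_or_ne c 0
      · exact ⟨0, LinearEquiv.refl k _, fun _ _ => rfl⟩
      · exact ⟨1, .of_vecMul !![1, 0, 0, 0, 0; 0, 1, 0, 0, 0; 0, 0, 0, 0, c; 0, 0, 1, 0, 0;
          0, 0, 0, 1, 0]⟩
    · exact ⟨1, .of_vecMul !![1, 0, 0, 0, 0; 0, 1, 0, 0, 0; 0, 0, 0, b, c; 0, 0, 1, 0, 0;
        0, 0, 0, 0, 1]⟩
  · exact ⟨1, .of_vecMul !![1, 0, 0, 0, 0; 0, 1, 0, 0, 0; 0, 0, a, b, c; 0, 0, 0, 1, 0;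
      0, 0, 0, 0, 1]⟩

theorem isStandard_of_d_ne_zero_of_g_i_eq_zero (hd : d ≠ 0) :
    IsStandard (flagBracket a b c d e f 0 h 0 0) := by
  obtain rfl | hf := eq_or_ne f 0
  · exact (isStandard_commonKernel (d * a) (d * c - b * e) (d * h)).of_iso (.of_vecMul
      !![1, 0, 0, 0, 0; 0, d, -b, 0, 0; 0, 0, 1, 0, 0; 0, 0, 0, d, e; 0, 0, 0, 0, 1])
  · exact (isStandard_jordan (d * f * a) h).of_iso (.of_vecMul
      !![1, 0, 0, 0, 0; 0, d * f, -(b * f), b * e - d * c, 0; 0, 0, 1, 0, 0; 0, 0, 0, d, e;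
        0, 0, 0, 0, d * f])

theorem isStandard_of_f_ne_zero_of_d_g_i_eq_zero (hf : f ≠ 0) :
    IsStandard (flagBracket a b c 0 e f 0 h 0 0) :=
  (isStandard_commonImage a (a * e + b * f) (f * h)).of_iso (.of_vecMul
    !![1, 0, 0, 0, 0; 0, f, 0, -c, 0; 0, 0, f, -e, 0; 0, 0, 0, 1, 0; 0, 0, 0, 0, f])

theorem flagBracket_swap_zero_one (a b c d e f g h i j : k) :
    BracketIso (flagBracket (-a) (-b) (-c) g h i d e f j) (flagBracket a b c d e f g h i j) :=
  .of_vecMul !![0, 1, 0, 0, 0; 1, 0, 0, 0, 0; 0, 0, 1, 0, 0; 0, 0, 0, 1, 0; 0, 0, 0, 0, 1]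

theorem flagBracket_swap_three_four (a b c e h : k) :
    BracketIso (flagBracket a c b e 0 0 h 0 0 0) (flagBracket a b c 0 e 0 0 h 0 0) :=
  .of_vecMul !![1, 0, 0, 0, 0; 0, 1, 0, 0, 0; 0, 0, 1, 0, 0; 0, 0, 0, 0, 1; 0, 0, 0, 1, 0]

theorem flagBracket_shear_one (a b c d e f g h i j s : k) {t : k} (ht : t ≠ 0) :
    BracketIso
      (flagBracket (t * a) (t * b) (t * c) d e f (t * g - s * d) (t * h - s * e) (t * i - s * f) j)
      (flagBracket a b c d e f g h i j) :=
  .of_vecMul !![1, 0, 0, 0, 0; -s, t, 0, 0, 0; 0, 0, 1, 0, 0; 0, 0, 0, 1, 0; 0, 0, 0, 0, 1]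

theorem isStandard_of_d_ne_zero (hd : d ≠ 0) (hgf : g * f = d * i) :
    IsStandard (flagBracket a b c d e f g h i 0) := by
  have shear := flagBracket_shear_one a b c d e f g h i 0 g hd
  rw [mul_comm g d, sub_self, ← hgf, sub_self] at shear
  exact (isStandard_of_d_ne_zero_of_g_i_eq_zero hd).of_iso shear

theorem isStandard_of_f_ne_zero (hf : f ≠ 0) : IsStandard (flagBracket a b c 0 e f 0 h i 0) := by
  have shear := flagBracket_shear_one a b c 0 e f 0 h i 0 i hf
  rw [mul_comm f i, sub_self, mul_zero, mul_zero, sub_self] at shear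
  exact (isStandard_of_f_ne_zero_of_d_g_i_eq_zero hf).of_iso shear

theorem isStandard_of_j_eq_zero (hgf : g * f = d * i) :
    IsStandard (flagBracket a b c d e f g h i 0) := by
  obtain hd | rfl := ne_or_eq d 0
  · exact isStandard_of_d_ne_zero hd hgf
  obtain hg | rfl := ne_or_eq g 0
  · exact (isStandard_of_d_ne_zero hg hgf.symm).of_iso (flagBracket_swap_zero_one ..)
  obtain hf | rfl := ne_or_eq f 0
  · exact isStandard_of_f_ne_zero hf
  obtain hi | rfl := ne_or_eq i 0
  · exact (isStandard_of_f_ne_zero hi).of_iso (flagBracket_swap_zero_one ..)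
  refine .of_iso ?_ (flagBracket_swap_three_four a b c e h)
  obtain he | rfl := ne_or_eq e 0
  · exact isStandard_of_d_ne_zero he (by ring)
  obtain hh | rfl := ne_or_eq h 0
  · exact (isStandard_of_d_ne_zero hh (by ring)).of_iso (flagBracket_swap_zero_one ..)
  exact isStandard_trivialAction a c b

theorem flagBracket_clear_of_j_ne_zero (hj : j ≠ 0) (hgf : g * f = d * i - b * j) :
    BracketIso (flagBracket 0 0 (j * (j * c - i * e + h * f)) (j * d) 0 0 (j * g) 0 0 j)
      (flagBracket 0 b c d e f g h i j) := by
  refine .of_vecMul !![j, 0, -f, e, 0; 0, j, -i, h, 0; 0, 0, 1, 0, 0; 0, 0, 0, 1, 0;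
    0, 0, 0, 0, 1] (h := fun x y => ?_)
  ext l
  fin_cases l <;>
    simp [flagBracket, Matrix.vecMul, dotProduct, Fin.sum_univ_five, -mul_eq_mul_left_iff]
  · linear_combination -j * (x 0 * y 1 - x 1 * y 0) * hgf
  · ring

theorem isStandard_of_j_ne_zero (hj : j ≠ 0) (hgf : g * f = d * i - b * j) :
    IsStandard (flagBracket 0 b c d e f g h i j) := by
  have of_g_eq_zero (c d : k) : IsStandard (flagBracket 0 0 c d 0 0 0 0 0 j) := by
    -- Now `e₁, e₃, e₄` span an abelian ideal, so exchange `e₁` and `e₂`.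
    have abelian : IsStandard (flagBracket 0 d 0 0 c 0 0 0 j 0) := isStandard_of_j_eq_zero (by ring)
    exact abelian.of_iso (.of_vecMul !![1, 0, 0, 0, 0; 0, 0, 1, 0, 0; 0, 1, 0, 0, 0;
      0, 0, 0, 1, 0; 0, 0, 0, 0, 1])
  refine .of_iso ?_ (flagBracket_clear_of_j_ne_zero hj hgf)
  generalize j * (j * c - i * e + h * f) = c, j * d = d, j * g = g
  obtain hd | rfl := ne_or_eq d 0
  · have shear := flagBracket_shear_one 0 0 c d 0 0 g 0 0 j g hd
    simp only [mul_comm g d, mul_zero, sub_self] at shear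
    exact (of_g_eq_zero ..).of_iso shear
  · have swap := flagBracket_swap_zero_one 0 0 c 0 0 0 g 0 0 j
    rw [neg_zero] at swap
    exact (of_g_eq_zero ..).of_iso swap

theorem IsLieBracket.isStandard_flagBracket
    (hL : IsLieBracket k (flagBracket a b c d e f g h i j)) :
    IsStandard (flagBracket a b c d e f g h i j) := by
  obtain ⟨haj, hgf⟩ := isLieBracket_flagBracket_iff.1 hL
  obtain rfl | hj := eq_or_ne j 0
  · exact isStandard_of_j_eq_zero (by simpa using hgf)
  · obtain rfl : a = 0 := (mul_eq_zero.1 haj).resolve_right hj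
    exact isStandard_of_j_ne_zero hj hgf

theorem IsLieBracket.isStandard {br : (Fin 5 → k) → (Fin 5 → k) → (Fin 5 → k)}
    (hL : IsLieBracket k br) (hN : IsNilpotentBracket br) : IsStandard br := by
  obtain ⟨br', ht, hbr⟩ := hN.exists_isStrictlyTriangular hL
  have hL' : IsLieBracket k br' := hL.of_iso hbr.symm
  obtain ⟨a, b, c, d, e, f, g, h, i, j, rfl⟩ := ht.exists_eq_flagBracket hL'
  exact hL'.isStandard_flagBracket.of_iso hbr.symm

theorem isLieBracket_nilpModel (n : Fin 9) : IsLieBracket k (nilpModel k n) := by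
  fin_cases n <;> exact isLieBracket_flagBracket_iff.2 (by simp)

theorem isNilpotentBracket_nilpModel (n : Fin 9) : IsNilpotentBracket (nilpModel k n) := by
  fin_cases n <;>
    exact IsStrictlyTriangular.isNilpotentBracket isStrictlyTriangular_flagBracket

theorem centralizerRank_nilpModel_zero (n : Fin 9) :
    centralizerRank (nilpModel k n) 0 = ![5, 3, 2, 1, 1, 1, 1, 2, 2] n := by
  refine ((isLieBracket_nilpModel n).centralizerRank_eq_card lcs_zero_eq_span
    (![.univ, {2, 3, 4}, {3, 4}, {4}, {4}, {4}, {4}, {3, 4}, {3, 4}] n) fun x => ?_).trans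
    (by fin_cases n <;> rfl)
  fin_cases n <;> simp [nilpModel, flagBracket, Fin.forall_fin_succ] <;> tauto

theorem centralizerRank_nilpModel_one (n : Fin 9) :
    centralizerRank (nilpModel k n) 1 = ![5, 5, 4, 5, 4, 3, 4, 5, 3] n := by
  have hL := isLieBracket_nilpModel (k := k) n
  refine (hL.centralizerRank_eq_card (hL.lcs_succ_eq_span lcs_zero_eq_span)
    (![.univ, .univ, {1, 2, 3, 4}, .univ, {1, 2, 3, 4}, {2, 3, 4}, {1, 2, 3, 4}, .univ,
      {2, 3, 4}] n) fun x => ?_).trans (by fin_cases n <;> rfl)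
  fin_cases n <;> simp [nilpModel, flagBracket, Fin.forall_fin_succ]
  tauto

theorem centralizerRank_nilpModel_two (n : Fin 9) :
    centralizerRank (nilpModel k n) 2 = ![5, 5, 5, 5, 5, 4, 4, 5, 5] n := by
  have hL := isLieBracket_nilpModel (k := k) n
  refine (hL.centralizerRank_eq_card (hL.lcs_succ_eq_span (hL.lcs_succ_eq_span lcs_zero_eq_span))
    (![.univ, .univ, .univ, .univ, .univ, {1, 2, 3, 4}, {1, 2, 3, 4}, .univ, .univ] n)
    fun x => ?_).trans (by fin_cases n <;> rfl)
  fin_cases n <;> simp [nilpModel, flagBracket, Fin.forall_fin_succ]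

theorem eq_of_bracketIso_nilpModel {m n : Fin 9} (h : BracketIso (nilpModel k m) (nilpModel k n)) :
    m = n := by
  have rank_eq := And.intro (h.centralizerRank_eq 0)
    (And.intro (h.centralizerRank_eq 1) (h.centralizerRank_eq 2))
  simp only [centralizerRank_nilpModel_zero, centralizerRank_nilpModel_one,
    centralizerRank_nilpModel_two] at rank_eq
  clear h
  revert m n
  decide

end DimensionFive

theorem nilpotent_lie_dim5_card_general (k : Type*) [Field k] :
    Nat.card (Quot (fun L L' : NilpLieStr k 5 => BracketIso L.1 L'.1)) = 9 := by
  let model (n : Fin 9) : NilpLieStr k 5 :=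
    ⟨nilpModel k n, isLieBracket_nilpModel n, isNilpotentBracket_nilpModel n⟩
  have equivalence : Equivalence (fun L L' : NilpLieStr k 5 => BracketIso L.1 L'.1) :=
    ⟨fun _ => ⟨.refl k _, fun _ _ => rfl⟩, .symm, .trans⟩
  have bijective : Function.Bijective
      fun n => Quot.mk (fun L L' : NilpLieStr k 5 => BracketIso L.1 L'.1) (model n) := by
    refine ⟨fun m n hmn => eq_of_bracketIso_nilpModel (equivalence.quot_mk_eq_iff _ _ |>.1 hmn), ?_⟩
    rintro ⟨br, hL, hN⟩
    obtain ⟨n, hn⟩ := hL.isStandard hN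
    exact ⟨n, Quot.sound hn⟩
  rw [← Nat.card_eq_of_bijective _ bijective, Nat.card_fin]

/-- Over any field `k` with `char k ≠ 2` there are exactly 9
isomorphism classes of 5-dimensional nilpotent Lie algebras. -/
theorem nilpotent_lie_dim5_card (k : Type) [Field k] (hk : (2 : k) ≠ 0) :
    Nat.card (Quot (fun L L' : NilpLieStr k 5 => BracketIso L.1 L'.1)) = 9 :=
  nilpotent_lie_dim5_card_general k
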